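/- Let s be a positive integer and let k be a binomially distributed random variable with s trials and success probability p ∈ [0,1], and let p̂ = k/s. For all ε, δ ∈ (0,1], if s ≥ (2p(1−p) + ε)/(ε²·δ), then P(p − ε ≤ p̂ ≤ p + ε) ≥ 1 − δ. -/

import Mathlib

/-- The probability that a binomial random variable with `s` trials and success
probability `p` takes the value `j` is `C(s,j) * p^j * (1-p)^(s-j)`. -/
noncomputable def binomPMF (s : ℕ) (p : ℝ) (j : ℕ) : ℝ :=
  (s.choose j : ℝ) * p ^ j * (1 - p) ^ (s - j)

/-!
The estimate `p̂ = k / s` has mean `p` and variance `p (1 - p) / s`, so Chebyshev's inequality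
bounds the probability of an error of at least `ε` by `p (1 - p) / (s ε ^ 2)`, which is at most `δ`
as soon as `s ≥ p (1 - p) / (ε ^ 2 δ)`. The binomial weights are the Bernstein polynomials evaluated
at `p`, so the variance comes from the variance identity for these polynomials.
-/

section Chebyshev

variable {ι 𝕜 : Type*} [Field 𝕜] [LinearOrder 𝕜] [IsStrictOrderedRing 𝕜]
  {S : Finset ι} {w : ι → 𝕜}

theorem sum_filter_le_abs_sub_le_div_sq (hw : ∀ i ∈ S, 0 ≤ w i) (f : ι → 𝕜) (c : 𝕜) {t : 𝕜}
    (ht : 0 < t) :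
    ∑ i ∈ S with t ≤ |f i - c|, w i ≤ (∑ i ∈ S, w i * (f i - c) ^ 2) / t ^ 2 := by
  rw [le_div_iff₀ (pow_pos ht 2), Finset.sum_mul]
  calc ∑ i ∈ S with t ≤ |f i - c|, w i * t ^ 2
      ≤ ∑ i ∈ S with t ≤ |f i - c|, w i * (f i - c) ^ 2 := by
        refine Finset.sum_le_sum fun i hi ↦ ?_
        obtain ⟨hiS, hle⟩ := Finset.mem_filter.mp hi
        have hsq : t ^ 2 ≤ (f i - c) ^ 2 := sq_le_sq.mpr ((abs_of_pos ht).trans_le hle)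
        exact mul_le_mul_of_nonneg_left hsq (hw i hiS)
    _ ≤ ∑ i ∈ S, w i * (f i - c) ^ 2 :=
        Finset.sum_le_sum_of_subset_of_nonneg (Finset.filter_subset _ _)
          fun i hi _ ↦ mul_nonneg (hw i hi) (sq_nonneg _)

theorem sum_sub_div_sq_le_sum_filter_abs_sub_lt (hw : ∀ i ∈ S, 0 ≤ w i) (f : ι → 𝕜) (c : 𝕜)
    {t : 𝕜} (ht : 0 < t) :
    ∑ i ∈ S, w i - (∑ i ∈ S, w i * (f i - c) ^ 2) / t ^ 2 ≤
      ∑ i ∈ S with |f i - c| < t, w i := by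
  have htail := sum_filter_le_abs_sub_le_div_sq hw f c ht
  have hsplit := Finset.sum_filter_add_sum_filter_not S (fun i ↦ |f i - c| < t) w
  simp only [not_lt] at hsplit
  linarith

end Chebyshev

section Binomial

variable (s : ℕ) (p : ℝ)

theorem eval_bernsteinPolynomial_eq_binomPMF (j : ℕ) :
    (bernsteinPolynomial ℝ s j).eval p = binomPMF s p j := by
  simp [bernsteinPolynomial, binomPMF]

theorem sum_binomPMF : ∑ j ∈ Finset.range (s + 1), binomPMF s p j = 1 := by
  simpa [Polynomial.eval_finsetSum, eval_bernsteinPolynomial_eq_binomPMF] using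
    congrArg (Polynomial.eval p) (bernsteinPolynomial.sum ℝ s)

theorem sum_mul_sub_sq_mul_binomPMF :
    ∑ j ∈ Finset.range (s + 1), (s * p - j) ^ 2 * binomPMF s p j = s * p * (1 - p) := by
  simpa [Polynomial.eval_finsetSum, eval_bernsteinPolynomial_eq_binomPMF] using
    congrArg (Polynomial.eval p) (bernsteinPolynomial.variance ℝ s)

variable {s} in
theorem sum_binomPMF_mul_div_sub_sq (hs : s ≠ 0) :
    ∑ j ∈ Finset.range (s + 1), binomPMF s p j * ((j : ℝ) / s - p) ^ 2 = p * (1 - p) / s := by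
  have hs' : (s : ℝ) ≠ 0 := Nat.cast_ne_zero.mpr hs
  calc ∑ j ∈ Finset.range (s + 1), binomPMF s p j * ((j : ℝ) / s - p) ^ 2
      = (∑ j ∈ Finset.range (s + 1), (s * p - j) ^ 2 * binomPMF s p j) / s ^ 2 := by
        rw [Finset.sum_div]
        refine Finset.sum_congr rfl fun j _ ↦ ?_
        field_simp
        ring
    _ = p * (1 - p) / s := by
        rw [sum_mul_sub_sq_mul_binomPMF]
        field_simp

variable {p}

theorem binomPMF_nonneg (hp0 : 0 ≤ p) (hp1 : p ≤ 1) (j : ℕ) : 0 ≤ binomPMF s p j :=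
  mul_nonneg (mul_nonneg (Nat.cast_nonneg _) (pow_nonneg hp0 j)) (pow_nonneg (sub_nonneg.mpr hp1) _)

variable {s}

theorem one_sub_div_le_sum_filter_binomPMF (hs : s ≠ 0) (hp0 : 0 ≤ p) (hp1 : p ≤ 1) {ε : ℝ}
    (hε : 0 < ε) :
    1 - p * (1 - p) / (s * ε ^ 2) ≤
      ∑ j ∈ Finset.range (s + 1) with |((j : ℕ) : ℝ) / s - p| < ε, binomPMF s p j := by
  simpa only [sum_binomPMF, sum_binomPMF_mul_div_sub_sq p hs, div_div] using
    sum_sub_div_sq_le_sum_filter_abs_sub_lt (S := Finset.range (s + 1))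
      (fun j _ ↦ binomPMF_nonneg s hp0 hp1 j) (fun j ↦ (j : ℝ) / s) p hε

theorem absolute_error_sharp_bound_general (hs : s ≠ 0) (hp0 : 0 ≤ p) (hp1 : p ≤ 1) {ε δ : ℝ}
    (hε : 0 < ε) (hδ : 0 < δ) (hbound : p * (1 - p) / (ε ^ 2 * δ) ≤ s) :
    1 - δ ≤ ∑ j ∈ Finset.range (s + 1),
      if p - ε ≤ (j : ℝ) / s ∧ (j : ℝ) / s ≤ p + ε then binomPMF s p j else 0 := by
  have hs' : (0 : ℝ) < s := Nat.cast_pos.mpr (Nat.pos_of_ne_zero hs)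
  have hfail : p * (1 - p) / (s * ε ^ 2) ≤ δ := by
    rw [div_le_iff₀ (by positivity)] at hbound
    rw [div_le_iff₀ (by positivity)]
    linarith
  calc 1 - δ ≤ 1 - p * (1 - p) / (s * ε ^ 2) := sub_le_sub_left hfail 1
    _ ≤ ∑ j ∈ Finset.range (s + 1) with |((j : ℕ) : ℝ) / s - p| < ε, binomPMF s p j :=
        one_sub_div_le_sum_filter_binomPMF hs hp0 hp1 hε
    _ ≤ ∑ j ∈ Finset.range (s + 1) with |((j : ℕ) : ℝ) / s - p| ≤ ε, binomPMF s p j :=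
        Finset.sum_le_sum_of_subset_of_nonneg (Finset.monotone_filter_right _ fun _ _ ↦ le_of_lt)
          fun j _ _ ↦ binomPMF_nonneg s hp0 hp1 j
    _ = _ := by
        simp only [Finset.sum_filter, abs_le, neg_le_sub_iff_le_add', sub_le_iff_le_add']

end Binomial

/-- **Absolute Error** (sharper bound from the paper's proof): if the number of
samples `s` satisfies `s ≥ (2p(1-p) + ε)/(ε² δ)`, then the estimate `p̂ = k/s` of
a binomially distributed `k` lies within `ε` of `p` with probability at least `1 - δ`. -/
theorem absolute_error_sharp_bound (s : ℕ) (hs : 1 ≤ s) (p : ℝ) (hp0 : 0 ≤ p) (hp1 : p ≤ 1)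
    (ε δ : ℝ) (hε0 : 0 < ε) (hε1 : ε ≤ 1) (hδ0 : 0 < δ) (hδ1 : δ ≤ 1)
    (hbound : (s : ℝ) ≥ (2 * p * (1 - p) + ε) / (ε ^ 2 * δ)) :
    (∑ j ∈ Finset.range (s + 1),
        if p - ε ≤ (j : ℝ) / (s : ℝ) ∧ (j : ℝ) / (s : ℝ) ≤ p + ε
        then binomPMF s p j else 0) ≥ 1 - δ := by
  have hpq : 0 ≤ p * (1 - p) := mul_nonneg hp0 (sub_nonneg.mpr hp1)
  exact absolute_error_sharp_bound_general (Nat.one_le_iff_ne_zero.mp hs) hp0 hp1 hε0 hδ0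
    ((div_le_div_of_nonneg_right (by linarith) (by positivity)).trans hbound)
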